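/- Let η be a nonnegative atomless random variable on a probability space (Ω, 𝓕, P), and let μ be a Borel probability measure on [0, ∞). Then the infimum of E[η·X] over all nonnegative random variables X on Ω with law μ equals ∫₀¹ q_η(1−p) · q_μ(p) dp, and this infimum is attained by X* := q_μ(1 − F_η(η)). -/

import Mathlib

open MeasureTheory Set

/-- The quantile function of a Borel measure `μ` on `ℝ`:
`q_μ(p) = inf {x | p ≤ μ((-∞, x])}`. -/
noncomputable def quantile (μ : Measure ℝ) (p : ℝ) : ℝ :=
  sInf {x : ℝ | p ≤ (μ (Iic x)).toReal}

/-!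
Couple `η` with `X` through a single uniform variable `p` as `(q_η (1 - p), q_μ p)`. By the layer
cake formula `E[η X] = ∫∫ P(η > s, X > t) ds dt`, and `P(η > s, X > t) ≥ 1 - F_η(s) - F_μ(t)` for
every `X` with law `μ`. The coupling above attains the positive part of this bound for all `s`, `t`
at once, hence minimises `E[η X]`. It can be realised on the given space because
`F_η (q_η u) = u` when `F_η` is continuous, so that `F_η(η)` is uniform and `p = 1 - F_η(η)`.
-/

open ProbabilityTheory Filter Topology
open scoped ENNReal

section Quantile

variable (μ : Measure ℝ) {p : ℝ}

lemma quantile_of_nonpos (hp : p ≤ 0) : quantile μ p = 0 := by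
  have huniv : {x : ℝ | p ≤ (μ (Iic x)).toReal} = univ :=
    eq_univ_of_forall fun _ => hp.trans ENNReal.toReal_nonneg
  rw [quantile, huniv, Real.sInf_univ]

variable {μ} in
lemma quantile_nonneg (hμ : μ (Iio 0) = 0) (p : ℝ) : 0 ≤ quantile μ p := by
  rcases le_or_gt p 0 with hp | hp
  · exact (quantile_of_nonpos μ hp).ge
  · refine Real.sInf_nonneg fun x (hx : p ≤ (μ (Iic x)).toReal) => ?_
    by_contra! hx0
    have hnull : μ (Iic x) = 0 := measure_mono_null (Iic_subset_Iio.2 hx0) hμ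
    rw [hnull, ENNReal.toReal_zero] at hx
    exact hx.not_gt hp

variable [IsProbabilityMeasure μ]

lemma quantile_eq_sInf_cdf (p : ℝ) : quantile μ p = sInf {x | p ≤ cdf μ x} := by
  simp only [quantile, cdf_eq_real, measureReal_def]

lemma quantile_of_one_lt (hp : 1 < p) : quantile μ p = 0 := by
  have hempty : {x | p ≤ cdf μ x} = ∅ :=
    eq_empty_of_forall_notMem fun x hx => (hx.trans (cdf_le_one μ x)).not_gt hp
  rw [quantile_eq_sInf_cdf, hempty, Real.sInf_empty]

lemma quantile_le_iff (hp : p ∈ Ioo (0 : ℝ) 1) {x : ℝ} :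
    quantile μ p ≤ x ↔ p ≤ cdf μ x := by
  rw [quantile_eq_sInf_cdf]
  have hbdd : BddBelow {x | p ≤ cdf μ x} := by
    obtain ⟨b, hb⟩ := ((tendsto_cdf_atBot μ).eventually_lt_const hp.1).exists
    exact ⟨b, fun y hy => ((monotone_cdf μ).reflect_lt (hb.trans_le hy)).le⟩
  have hne : {x | p ≤ cdf μ x}.Nonempty := by
    obtain ⟨b, hb⟩ := ((tendsto_cdf_atTop μ).eventually_const_lt hp.2).exists
    exact ⟨b, hb.le⟩
  refine ⟨fun h => ?_, fun h => csInf_le hbdd h⟩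
  have hright : Tendsto (cdf μ) (𝓝[>] x) (𝓝 (cdf μ x)) :=
    ((cdf μ).right_continuous x).mono Ioi_subset_Ici_self
  refine ge_of_tendsto hright ?_
  filter_upwards [self_mem_nhdsWithin] with y (hy : x < y)
  obtain ⟨z, hz, hzy⟩ := exists_lt_of_csInf_lt hne (h.trans_lt hy)
  exact le_trans hz (monotone_cdf μ hzy.le)

lemma lt_quantile_iff (hp : p ∈ Ioo (0 : ℝ) 1) {x : ℝ} :
    x < quantile μ p ↔ cdf μ x < p := by
  rw [← not_le, quantile_le_iff μ hp, not_le]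

lemma monotoneOn_quantile : MonotoneOn (quantile μ) (Ioo 0 1) := fun _ hp _ hp' hle =>
  (quantile_le_iff μ hp).2 (hle.trans ((quantile_le_iff μ hp').1 le_rfl))

variable {μ} in
lemma cdf_quantile (hcont : Continuous (cdf μ)) (hp : p ∈ Ioo (0 : ℝ) 1) :
    cdf μ (quantile μ p) = p := by
  refine le_antisymm ?_ ((quantile_le_iff μ hp).1 le_rfl)
  have hleft : Tendsto (cdf μ) (𝓝[<] quantile μ p) (𝓝 (cdf μ (quantile μ p))) :=
    hcont.continuousWithinAt
  refine le_of_tendsto hleft ?_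
  filter_upwards [self_mem_nhdsWithin] with x hx
  exact ((lt_quantile_iff μ hp).1 hx).le

-- At `p = 1` the quantile may be a junk value, so monotonicity is only available on `Ioo 0 1`.
@[fun_prop]
lemma measurable_quantile : Measurable (quantile μ) := by
  refine measurable_of_restrict_of_restrict_compl (measurableSet_Ioo (a := 0) (b := 1)) ?_ ?_
  · exact Monotone.measurable fun p p' hle => monotoneOn_quantile μ p.2 p'.2 hle
  · have houtside : (Ioo (0 : ℝ) 1)ᶜ.domRestrict (quantile μ) =
        (Ioo (0 : ℝ) 1)ᶜ.domRestrict (indicator {1} fun _ => quantile μ 1) := by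
      ext ⟨p, hp⟩
      rcases eq_or_ne p 1 with rfl | hp1
      · simp
      · rcases le_or_gt p 0 with hp0 | hp0
        · simp [hp1, quantile_of_nonpos μ hp0]
        · have hlt : 1 < p := lt_of_le_of_ne (not_lt.1 fun h => hp ⟨hp0, h⟩) hp1.symm
          simp [hp1, quantile_of_one_lt μ hlt]
    rw [houtside]
    exact (measurable_const.indicator (measurableSet_singleton 1)).comp measurable_subtype_coe

end Quantile

section UniformTransforms

lemma measurePreserving_quantile (μ : Measure ℝ) [IsProbabilityMeasure μ] :
    MeasurePreserving (quantile μ) (volume.restrict (Ioo 0 1)) μ := by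
  refine ⟨measurable_quantile μ, Measure.ext_of_Iic _ _ fun x => ?_⟩
  have hpre : quantile μ ⁻¹' Iic x ∩ Ioo 0 1 = Iic (cdf μ x) ∩ Ioo 0 1 := by
    ext p
    exact and_congr_left fun hp => quantile_le_iff μ hp
  calc (volume.restrict (Ioo 0 1)).map (quantile μ) (Iic x)
      = volume (Iic (cdf μ x) ∩ Ioo 0 1) := by
        rw [Measure.map_apply (measurable_quantile μ) measurableSet_Iic,
          Measure.restrict_apply (measurable_quantile μ measurableSet_Iic), hpre]
    _ = volume (Ioc 0 1 ∩ Iic (cdf μ x)) := by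
        rw [inter_comm]
        exact measure_congr (Ioo_ae_eq_Ioc.inter (ae_eq_refl _))
    _ = μ (Iic x) := by
        rw [Ioc_inter_Iic, inf_eq_right.2 (cdf_le_one μ x), Real.volume_Ioc, sub_zero, ofReal_cdf]

lemma measurePreserving_cdf {ν : Measure ℝ} [IsProbabilityMeasure ν]
    (hcont : Continuous (cdf ν)) :
    MeasurePreserving (cdf ν) ν (volume.restrict (Ioo 0 1)) := by
  have hid : cdf ν ∘ quantile ν =ᵐ[volume.restrict (Ioo 0 1)] id := by
    filter_upwards [ae_restrict_mem measurableSet_Ioo] with u hu using cdf_quantile hcont hu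
  refine ⟨hcont.measurable, ?_⟩
  calc ν.map (cdf ν)
      = (volume.restrict (Ioo 0 1)).map (cdf ν ∘ quantile ν) := by
        rw [← Measure.map_map hcont.measurable (measurable_quantile ν),
          (measurePreserving_quantile ν).map_eq]
    _ = volume.restrict (Ioo 0 1) := by rw [Measure.map_congr hid, Measure.map_id]

lemma measurePreserving_one_sub_Ioo :
    MeasurePreserving (fun p : ℝ => 1 - p) (volume.restrict (Ioo 0 1))
      (volume.restrict (Ioo 0 1)) := by
  simpa using (Measure.measurePreserving_sub_left (volume : Measure ℝ) 1).restrict_preimage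
    (measurableSet_Ioo (a := 0) (b := 1))

lemma lintegral_one_sub_cdf {ν : Measure ℝ} [IsProbabilityMeasure ν]
    (hcont : Continuous (cdf ν)) {f : ℝ → ℝ → ℝ≥0∞} (hf : Measurable (Function.uncurry f)) :
    ∫⁻ x, f x (1 - cdf ν x) ∂ν = ∫⁻ p in Ioo (0 : ℝ) 1, f (quantile ν (1 - p)) p := by
  have hcdf : Measurable (cdf ν) := hcont.measurable
  calc ∫⁻ x, f x (1 - cdf ν x) ∂ν
      = ∫⁻ u in Ioo (0 : ℝ) 1, f (quantile ν u) (1 - cdf ν (quantile ν u)) :=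
        ((measurePreserving_quantile ν).lintegral_comp (by fun_prop)).symm
    _ = ∫⁻ u in Ioo (0 : ℝ) 1, f (quantile ν u) (1 - u) :=
        setLIntegral_congr_fun measurableSet_Ioo fun u hu => by rw [cdf_quantile hcont hu]
    _ = ∫⁻ p in Ioo (0 : ℝ) 1, f (quantile ν (1 - p)) (1 - (1 - p)) :=
        (measurePreserving_one_sub_Ioo.lintegral_comp (by fun_prop)).symm
    _ = ∫⁻ p in Ioo (0 : ℝ) 1, f (quantile ν (1 - p)) p := by simp only [sub_sub_cancel]

end UniformTransforms

section LowerBound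

-- The one-variable layer cake formula, for `f` under the density `g` and then for `g`.
lemma lintegral_ofReal_mul_eq_lintegral_meas_lt {α : Type*} [MeasurableSpace α] (ρ : Measure α)
    {f g : α → ℝ} (hf : Measurable f) (hg : Measurable g) (hf0 : 0 ≤ᵐ[ρ] f) (hg0 : 0 ≤ᵐ[ρ] g) :
    ∫⁻ a, ENNReal.ofReal (f a * g a) ∂ρ =
      ∫⁻ s in Ioi (0 : ℝ), ∫⁻ t in Ioi (0 : ℝ), ρ {a | s < f a ∧ t < g a} := by
  set ρg : Measure α := ρ.withDensity fun a => ENNReal.ofReal (g a)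
  have hf0g : 0 ≤ᵐ[ρg] f := (withDensity_absolutelyContinuous ρ _).ae_le hf0
  have hlevel (s : ℝ) :
      ρg {a | s < f a} = ∫⁻ t in Ioi (0 : ℝ), ρ {a | s < f a ∧ t < g a} := by
    rw [withDensity_apply _ (measurableSet_lt measurable_const hf),
      lintegral_eq_lintegral_meas_lt _ (ae_restrict_of_ae hg0) hg.aemeasurable]
    refine lintegral_congr fun t => ?_
    rw [Measure.restrict_apply (measurableSet_lt measurable_const hg), inter_comm]
    rfl
  calc ∫⁻ a, ENNReal.ofReal (f a * g a) ∂ρ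
      = ∫⁻ a, ENNReal.ofReal (f a) ∂ρg := by
        rw [lintegral_withDensity_eq_lintegral_mul _ hg.ennreal_ofReal hf.ennreal_ofReal]
        refine lintegral_congr_ae ?_
        filter_upwards [hf0] with a ha
        rw [ENNReal.ofReal_mul ha, Pi.mul_apply, mul_comm]
    _ = ∫⁻ s in Ioi (0 : ℝ), ρg {a | s < f a} :=
        lintegral_eq_lintegral_meas_lt _ hf0g hf.aemeasurable
    _ = ∫⁻ s in Ioi (0 : ℝ), ∫⁻ t in Ioi (0 : ℝ), ρ {a | s < f a ∧ t < g a} :=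
        lintegral_congr hlevel

lemma volume_Ioo_lt_quantile_one_sub_and_lt_quantile (ν μ : Measure ℝ) [IsProbabilityMeasure ν]
    [IsProbabilityMeasure μ] (s t : ℝ) :
    volume.restrict (Ioo 0 1) {p | s < quantile ν (1 - p) ∧ t < quantile μ p} =
      ENNReal.ofReal (1 - cdf ν s - cdf μ t) := by
  have hset : {p | s < quantile ν (1 - p) ∧ t < quantile μ p} ∩ Ioo 0 1 =
      Ioo (cdf μ t) (1 - cdf ν s) ∩ Ioo 0 1 := by
    ext p
    refine and_congr_left fun hp => ?_
    have hp' : 1 - p ∈ Ioo (0 : ℝ) 1 := ⟨sub_pos.2 hp.2, sub_lt_self 1 hp.1⟩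
    rw [mem_ofPred_eq, lt_quantile_iff ν hp', lt_quantile_iff μ hp, lt_sub_comm]
    exact and_comm
  have hsub : Ioo (cdf μ t) (1 - cdf ν s) ⊆ Ioo 0 1 :=
    Ioo_subset_Ioo (cdf_nonneg μ t) (sub_le_self 1 (cdf_nonneg ν s))
  rw [Measure.restrict_apply' measurableSet_Ioo, hset, inter_eq_left.2 hsub, Real.volume_Ioo]

variable {Ω : Type*} [MeasurableSpace Ω] {P : Measure Ω} {X Y : Ω → ℝ}

lemma map_Iio_zero_eq_zero (hX : Measurable X) (hX0 : 0 ≤ᵐ[P] X) : P.map X (Iio 0) = 0 := by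
  rw [Measure.map_apply hX measurableSet_Iio, measure_eq_zero_iff_ae_notMem]
  filter_upwards [hX0] with ω hω using not_lt.2 hω

variable [IsProbabilityMeasure P]

lemma cdf_map_eq_real (hX : Measurable X) (x : ℝ) : cdf (P.map X) x = P.real (X ⁻¹' Iic x) := by
  have := Measure.isProbabilityMeasure_map (μ := P) hX.aemeasurable
  rw [cdf_eq_real, map_measureReal_apply hX measurableSet_Iic]

lemma one_sub_cdf_sub_cdf_le_measure (hX : Measurable X) (hY : Measurable Y) (s t : ℝ) :
    ENNReal.ofReal (1 - cdf (P.map X) s - cdf (P.map Y) t) ≤ P {ω | s < X ω ∧ t < Y ω} := by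
  have hcompl : {ω | s < X ω ∧ t < Y ω} = (X ⁻¹' Iic s ∪ Y ⁻¹' Iic t)ᶜ := by
    ext ω
    simp
  have hunion : P.real (X ⁻¹' Iic s ∪ Y ⁻¹' Iic t) ≤ cdf (P.map X) s + cdf (P.map Y) t := by
    rw [cdf_map_eq_real hX, cdf_map_eq_real hY]
    exact measureReal_union_le _ _
  refine ENNReal.ofReal_le_of_le_toReal ?_
  rw [← measureReal_def, hcompl,
    probReal_compl_eq_one_sub ((hX measurableSet_Iic).union (hY measurableSet_Iic))]
  linarith

theorem lintegral_quantile_one_sub_mul_quantile_le (hX : Measurable X) (hY : Measurable Y)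
    (hX0 : 0 ≤ᵐ[P] X) (hY0 : 0 ≤ᵐ[P] Y) :
    ∫⁻ p in Ioo (0 : ℝ) 1, ENNReal.ofReal (quantile (P.map X) (1 - p) * quantile (P.map Y) p) ≤
      ∫⁻ ω, ENNReal.ofReal (X ω * Y ω) ∂P := by
  have := Measure.isProbabilityMeasure_map (μ := P) hX.aemeasurable
  have := Measure.isProbabilityMeasure_map (μ := P) hY.aemeasurable
  have hqX (p : ℝ) := quantile_nonneg (map_Iio_zero_eq_zero hX hX0) (1 - p)
  have hqY := quantile_nonneg (map_Iio_zero_eq_zero hY hY0)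
  rw [lintegral_ofReal_mul_eq_lintegral_meas_lt P hX hY hX0 hY0,
    lintegral_ofReal_mul_eq_lintegral_meas_lt _ (by fun_prop) (by fun_prop)
      (ae_of_all _ hqX) (ae_of_all _ hqY)]
  refine lintegral_mono fun s => lintegral_mono fun t => ?_
  rw [volume_Ioo_lt_quantile_one_sub_and_lt_quantile]
  exact one_sub_cdf_sub_cdf_le_measure hX hY s t

end LowerBound

/-- The infimum of `E[η X]` over all nonnegative `X` with law `μ` equals
`∫₀¹ q_η(1-p) q_μ(p) dp`, and it is attained by `X* := q_μ(1 - F_η(η))`. -/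
theorem hardy_littlewood_inf {Ω : Type*} [MeasurableSpace Ω]
    (P : Measure Ω) [IsProbabilityMeasure P]
    (η : Ω → ℝ) (hη : Measurable η) (hη0 : ∀ ω, 0 ≤ η ω)
    (hatomless : Continuous fun x => ((P.map η) (Iic x)).toReal)
    (μ : Measure ℝ) [IsProbabilityMeasure μ] (hμ : μ (Iio 0) = 0) :
    sInf {c : ENNReal | ∃ X : Ω → ℝ, Measurable X ∧ (∀ ω, 0 ≤ X ω) ∧ P.map X = μ ∧
          c = ∫⁻ ω, ENNReal.ofReal (η ω * X ω) ∂P}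
        = ∫⁻ p in Ioo (0:ℝ) 1,
            ENNReal.ofReal (quantile (P.map η) (1 - p) * quantile μ p) ∧
    P.map (fun ω => quantile μ (1 - ((P.map η) (Iic (η ω))).toReal)) = μ ∧
    ∫⁻ ω, ENNReal.ofReal (η ω * quantile μ (1 - ((P.map η) (Iic (η ω))).toReal)) ∂P
      = ∫⁻ p in Ioo (0:ℝ) 1,
          ENNReal.ofReal (quantile (P.map η) (1 - p) * quantile μ p) := by
  have := Measure.isProbabilityMeasure_map (μ := P) hη.aemeasurable
  have hcdf (x : ℝ) : (P.map η (Iic x)).toReal = cdf (P.map η) x := (cdf_eq_real _ x).symm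
  simp only [hcdf] at hatomless ⊢
  have hlaw : MeasurePreserving (fun ω => quantile μ (1 - cdf (P.map η) (η ω))) P μ :=
    (measurePreserving_quantile μ).comp <| measurePreserving_one_sub_Ioo.comp <|
      (measurePreserving_cdf hatomless).comp (hη.measurePreserving P)
  have hcost : ∫⁻ ω, ENNReal.ofReal (η ω * quantile μ (1 - cdf (P.map η) (η ω))) ∂P =
      ∫⁻ p in Ioo (0 : ℝ) 1, ENNReal.ofReal (quantile (P.map η) (1 - p) * quantile μ p) := by
    have hcdfm : Measurable (cdf (P.map η)) := hatomless.measurable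
    rw [← lintegral_one_sub_cdf hatomless (f := fun x p => ENNReal.ofReal (x * quantile μ p))
        (by fun_prop), lintegral_map (by fun_prop) hη]
  refine ⟨le_antisymm (sInf_le ?_) (le_sInf ?_), hlaw.map_eq, hcost⟩
  · exact ⟨_, hlaw.measurable, fun _ => quantile_nonneg hμ _, hlaw.map_eq, hcost.symm⟩
  · rintro _ ⟨X, hX, hX0, rfl, rfl⟩
    exact lintegral_quantile_one_sub_mul_quantile_le hη hX (ae_of_all _ hη0) (ae_of_all _ hX0)
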